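/- arXiv:2207.12621 — 3 statements merged into one kernel-verified Lean document; each statement's English description precedes it below -/
import Mathlib

section
/- Suppose λ ∈ ℝ with λ ≠ 0, w ∈ V and u ∈ Q satisfy the mixed eigenvalue equations: ⟪w, τ⟫_V + ⟪D τ, u⟫_Q = 0 for all τ ∈ V, and ⟪D w, v⟫_Q = -λ ⟪u, v⟫_Q for all v ∈ Q. Then D w = -λ • u (equivalently u = -(1/λ) • D w), and (λ, w) satisfies the primal eigenvalue equation ⟪D w, D τ⟫_Q = λ ⟪w, τ⟫_V for all τ ∈ V. -/
/-- If (λ, w, u) with λ ≠ 0 solves the mixed eigenvalue problem, then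
D w = -λ • u (equivalently u = -(1/λ) • D w) and (λ, w) solves the
primal eigenvalue problem. -/
theorem mixed_to_primal
    {V Q : Type*} [NormedAddCommGroup V] [InnerProductSpace ℝ V]
    [NormedAddCommGroup Q] [InnerProductSpace ℝ Q]
    (D : V →L[ℝ] Q) (lam : ℝ) (hlam : lam ≠ 0) (w : V) (u : Q)
    (hmixed1 : ∀ τ : V, @inner ℝ _ _ w τ + @inner ℝ _ _ (D τ) u = 0)
    (hmixed2 : ∀ v : Q, @inner ℝ _ _ (D w) v = -lam * @inner ℝ _ _ u v) :
    D w = -lam • u ∧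
    (∀ τ : V, @inner ℝ _ _ (D w) (D τ) = lam * @inner ℝ _ _ w τ) := by
  refine ⟨ext_inner_right ℝ fun v => ?_, fun τ => ?_⟩
  · rw [hmixed2, real_inner_smul_left]
  · rw [hmixed2, real_inner_comm]
    linear_combination (-lam) * hmixed1 τ
end

section
/- Assume D has dense range in the sense that any v ∈ Q with ⟪D τ, v⟫_Q = 0 for all τ ∈ V must be zero. Suppose λ ∈ ℝ, w ∈ V and u ∈ Q satisfy the mixed eigenvalue equations ⟪w, τ⟫_V + ⟪D τ, u⟫_Q = 0 for all τ ∈ V and ⟪D w, v⟫_Q = -λ ⟪u, v⟫_Q for all v ∈ Q, and that (w, u) ≠ (0, 0). Then λ > 0. -/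
/-- If D has dense range (any v orthogonal to the range of D is zero) and
(λ, w, u) ≠ (0,0) solves the mixed eigenvalue problem, then λ > 0. -/
theorem mixed_eigenvalue_pos
    {V Q : Type*} [NormedAddCommGroup V] [InnerProductSpace ℝ V]
    [NormedAddCommGroup Q] [InnerProductSpace ℝ Q]
    (D : V →L[ℝ] Q)
    (hdense : ∀ v : Q, (∀ τ : V, @inner ℝ _ _ (D τ) v = 0) → v = 0)
    (lam : ℝ) (w : V) (u : Q)
    (hmixed1 : ∀ τ : V, @inner ℝ _ _ w τ + @inner ℝ _ _ (D τ) u = 0)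
    (hmixed2 : ∀ v : Q, @inner ℝ _ _ (D w) v = -lam * @inner ℝ _ _ u v)
    (hne : ¬(w = 0 ∧ u = 0)) :
    0 < lam := by
  have hw : w ≠ 0 := fun hw =>
    hne ⟨hw, hdense u fun τ => by simpa [hw] using hmixed1 τ⟩
  have hpos : 0 < inner ℝ w w := real_inner_self_pos.mpr hw
  have henergy : inner ℝ w w = lam * inner ℝ u u := by
    linarith [hmixed1 w, hmixed2 u]
  exact pos_of_mul_pos_left (henergy ▸ hpos) real_inner_self_nonneg
end

section
/- Let V be a real normed vector space, Q a real inner product space, a : V → V → ℝ a bilinear form, and b : V → Q → ℝ a bilinear form. Assume: (boundedness) there is α* > 0 with |a(x,y)| ≤ α* ‖x‖ ‖y‖ for all x, y ∈ V; (coercivity) there is α_* > 0 with a(x,x) ≥ α_* ‖x‖² for all x ∈ V; (inf-sup) there is β > 0 such that for every v ∈ Q there exists τ ∈ V with τ ≠ 0 and β ‖v‖ ‖τ‖ ≤ b(τ, v). Suppose e ∈ V, δ ∈ Q and g ∈ Q satisfy a(e, τ) + b(τ, δ) = 0 for all τ ∈ V, and b(e, δ) = ⟪g, δ⟫_Q.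 Then β ‖δ‖ ≤ α* ‖e‖ and α_* β ‖e‖ ≤ α* ‖g‖. -/
/-- Abstract stability estimate underlying Lemma 3.7: if a is bounded and
coercive, b satisfies an inf-sup condition, and (e, δ) solves the error
equations with datum g, then β‖δ‖ ≤ α*‖e‖ and α_* β ‖e‖ ≤ α* ‖g‖. -/
theorem abstract_stability_estimate
    {V Q : Type*} [NormedAddCommGroup V] [NormedSpace ℝ V]
    [NormedAddCommGroup Q] [InnerProductSpace ℝ Q]
    (a : V →ₗ[ℝ] V →ₗ[ℝ] ℝ) (b : V →ₗ[ℝ] Q →ₗ[ℝ] ℝ)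
    (αs αb β : ℝ) (hαb : 0 < αb) (hαs : 0 < αs) (hβ : 0 < β)
    (hbound : ∀ x y : V, |a x y| ≤ αb * ‖x‖ * ‖y‖)
    (hcoer : ∀ x : V, αs * ‖x‖ ^ 2 ≤ a x x)
    (hinfsup : ∀ v : Q, ∃ τ : V, τ ≠ 0 ∧ β * ‖v‖ * ‖τ‖ ≤ b τ v)
    (e : V) (δ : Q) (g : Q)
    (h1 : ∀ τ : V, a e τ + b τ δ = 0)
    (h2 : b e δ = @inner ℝ _ _ g δ) :
    β * ‖δ‖ ≤ αb * ‖e‖ ∧ αs * β * ‖e‖ ≤ αb * ‖g‖ := by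
  have hδ : β * ‖δ‖ ≤ αb * ‖e‖ := by
    obtain ⟨τ, hτ, hb⟩ := hinfsup δ
    refine le_of_mul_le_mul_right ?_ (norm_pos_iff.mpr hτ)
    linarith [h1 τ, neg_abs_le (a e τ), hbound e τ]
  refine ⟨hδ, ?_⟩
  rcases (norm_nonneg e).eq_or_lt with he | he
  · rw [← he, mul_zero]
    positivity
  · have henergy : αs * ‖e‖ ^ 2 ≤ ‖g‖ * ‖δ‖ := by
      linarith [hcoer e, h1 e, neg_abs_le (inner ℝ g δ), abs_real_inner_le_norm g δ]
    refine le_of_mul_le_mul_right ?_ he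
    calc αs * β * ‖e‖ * ‖e‖ = β * (αs * ‖e‖ ^ 2) := by ring
      _ ≤ β * (‖g‖ * ‖δ‖) := by gcongr
      _ = ‖g‖ * (β * ‖δ‖) := by ring
      _ ≤ ‖g‖ * (αb * ‖e‖) := by gcongr
      _ = αb * ‖g‖ * ‖e‖ := by ring
end
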